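/- Let H be a simple 3-uniform 3-partite hypergraph with edge ideal I = I(H). If H contains no bad subhypergraph of length 3, then I^(2) = I^2. -/

import Mathlib

open MvPolynomial

noncomputable def symbolicPower {R : Type*} [CommRing R] (I : Ideal R) (n : ℕ) : Ideal R :=
  sInf { J : Ideal R | ∃ (p : Ideal R) (hp : p.IsPrime),
    p ∈ associatedPrimes R (R ⧸ I) ∧
    J = Ideal.comap (algebraMap R (Localization (@Ideal.primeCompl R _ p hp)))
        (Ideal.map (algebraMap R (Localization (@Ideal.primeCompl R _ p hp))) (I ^ n)) }

noncomputable def edgeIdeal (k : Type*) {V : Type*} [CommRing k] [DecidableEq V]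
    (E : Finset (Finset V)) : Ideal (MvPolynomial V k) :=
  Ideal.span ((fun e : Finset V => ∏ x ∈ e, (X x : MvPolynomial V k)) '' ↑E)

/-- three hyperedges forming a bad subhypergraph of length 3: pairwise distinct,
pairwise intersecting in exactly one vertex, with the three intersection vertices
pairwise distinct. -/
def BadTriple {V : Type*} [DecidableEq V] (E : Finset (Finset V))
    (e₁ e₂ e₃ : Finset V) : Prop :=
  e₁ ∈ E ∧ e₂ ∈ E ∧ e₃ ∈ E ∧ e₁ ≠ e₂ ∧ e₂ ≠ e₃ ∧ e₁ ≠ e₃ ∧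
  (e₁ ∩ e₂).card = 1 ∧ (e₂ ∩ e₃).card = 1 ∧ (e₁ ∩ e₃).card = 1 ∧
  e₁ ∩ e₂ ≠ e₂ ∩ e₃ ∧ e₂ ∩ e₃ ≠ e₁ ∩ e₃ ∧ e₁ ∩ e₂ ≠ e₁ ∩ e₃

/-!
Let `C` be a minimal vertex cover. The prime generated by its variables is associated to `I`, so
every `f ∈ I^(n)` vanishes to order at least `n` along it; that is, every monomial `x^b` of `f`
satisfies `∑ v ∈ C, b v ≥ n`, and then the same holds for arbitrary covers.

Suppose that `x^b` is not divisible by any product of two edges. Then any two edges contained in the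
support of `b` meet in a vertex of exponent `1`. If these edges had no such vertex in common, choose
a minimal subfamily without one: every member is missed by a vertex lying on all the others, and
since there are at least three members, the three colour classes force these vertices to have distinct
colours. So the subfamily has exactly three members, and they form a bad triple. Hence there is a
common vertex of exponent `1`; together with the vertices of exponent `0` it is a cover along which
`x^b` has degree at most `1`, so `x^b` does not occur in an element of `I^(2)`.
-/

section SymbolicPower

variable {R : Type*} [CommRing R] {I p : Ideal R}

lemma pow_le_symbolicPower (I : Ideal R) (n : ℕ) : I ^ n ≤ symbolicPower I n := by
  refine le_sInf ?_
  rintro _ ⟨p, hp, -, rfl⟩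
  exact Ideal.le_comap_map

lemma exists_mul_mem_pow_of_mem_symbolicPower {n : ℕ} {x : R} (hx : x ∈ symbolicPower I n)
    (hp : p ∈ associatedPrimes R (R ⧸ I)) : ∃ s ∉ p, s * x ∈ I ^ n := by
  have hprime : p.IsPrime := hp.isPrime
  have hmem := Submodule.mem_sInf.1 hx _ ⟨p, hprime, hp, rfl⟩
  rwa [Ideal.mem_comap, IsLocalization.algebraMap_mem_map_algebraMap_iff p.primeCompl] at hmem

lemma mem_associatedPrimes_quotient_of_mul_mem_iff [hp : p.IsPrime] {m : R}
    (h : ∀ r, r * m ∈ I ↔ r ∈ p) : p ∈ associatedPrimes R (R ⧸ I) := by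
  have hcolon : (⊥ : Submodule R (R ⧸ I)).colon {Ideal.Quotient.mk I m} = p := by
    ext r
    rw [Submodule.mem_colon_singleton, Submodule.mem_bot, Algebra.smul_def,
      Ideal.Quotient.algebraMap_eq, ← map_mul, Ideal.Quotient.eq_zero_iff_mem, h]
  exact ⟨hp, Ideal.Quotient.mk I m, by rw [hcolon, hp.radical]⟩

end SymbolicPower

section VanishingOrder

variable {σ R : Type*} [CommRing R] {C : Set σ}

lemma weight_indicator_one_ne_zero_iff {b : σ →₀ ℕ} :
    Finsupp.weight (C.indicator 1) b ≠ 0 ↔ ∃ v ∈ C, b v ≠ 0 := by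
  rw [Finsupp.weight_apply, Finsupp.sum, ne_eq, Finset.sum_eq_zero_iff]
  simp only [Finsupp.mem_support_iff, smul_eq_mul, mul_eq_zero, Set.indicator_apply_eq_zero,
    Pi.one_apply, one_ne_zero]
  grind

lemma weight_indicator_one (C : Finset σ) (b : σ →₀ ℕ) :
    Finsupp.weight ((C : Set σ).indicator 1) b = ∑ v ∈ C, b v := by
  classical
  simp only [Finsupp.weight_apply, Finsupp.sum, Set.indicator_apply, Finset.mem_coe, Pi.one_apply,
    smul_eq_mul, mul_ite, mul_one, mul_zero]
  rw [Finset.sum_ite_mem, Finset.inter_comm]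
  exact Finset.sum_subset Finset.inter_subset_left fun v hv hvb => by
    simpa [hv] using hvb

/-- The order of vanishing of a polynomial along the coordinate subspace on which the variables in
`C` vanish. It is computed in the power series ring, which carries the weighted orders. -/
noncomputable def vanishingOrder (C : Set σ) (f : MvPolynomial σ R) : ℕ∞ :=
  (f : MvPowerSeries σ R).weightedOrder (C.indicator 1)

lemma natCast_le_vanishingOrder_iff {f : MvPolynomial σ R} {n : ℕ} :
    n ≤ vanishingOrder C f ↔ ∀ b ∈ f.support, n ≤ Finsupp.weight (C.indicator 1) b := by
  constructor
  · intro h b hb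
    rw [mem_support_iff, ← MvPolynomial.coeff_coe] at hb
    exact_mod_cast h.trans (MvPowerSeries.weightedOrder_le _ hb)
  · refine fun h => MvPowerSeries.nat_le_weightedOrder _ fun b hb => ?_
    rw [MvPolynomial.coeff_coe, ← notMem_support_iff]
    exact fun hmem => (h b hmem).not_gt hb

lemma vanishingOrder_mul [NoZeroDivisors R] (f g : MvPolynomial σ R) :
    vanishingOrder C (f * g) = vanishingOrder C f + vanishingOrder C g := by
  rw [vanishingOrder, MvPolynomial.coe_mul, MvPowerSeries.weightedOrder_mul]
  rfl

lemma mem_span_X_image_iff_vanishingOrder_ne_zero {f : MvPolynomial σ R} :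
    f ∈ Ideal.span (X '' C) ↔ vanishingOrder C f ≠ 0 := by
  rw [← Order.one_le_iff_ne_zero, ← Nat.cast_one, natCast_le_vanishingOrder_iff,
    mem_ideal_span_X_image]
  simp only [Nat.one_le_iff_ne_zero, weight_indicator_one_ne_zero_iff]

lemma natCast_le_vanishingOrder_of_mem_span_X_image_pow {f : MvPolynomial σ R} {n : ℕ}
    (hf : f ∈ Ideal.span (X '' C) ^ n) : n ≤ vanishingOrder C f := by
  induction n generalizing f with
  | zero => simp
  | succ n ih =>
    rw [pow_succ] at hf
    induction hf using Submodule.mul_induction_on' with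
    | mem_mul_mem g hg h hh =>
      rw [mem_span_X_image_iff_vanishingOrder_ne_zero, ← Order.one_le_iff_ne_zero] at hh
      rw [vanishingOrder, MvPolynomial.coe_mul]
      exact_mod_cast (add_le_add (ih hg) hh).trans (MvPowerSeries.le_weightedOrder_mul _)
    | add g _ h _ hg hh =>
      rw [vanishingOrder, MvPolynomial.coe_add]
      exact (le_min hg hh).trans (MvPowerSeries.min_weightedOrder_le_add _)

lemma isPrime_span_X_image [IsDomain R] (C : Set σ) :
    (Ideal.span (X '' C : Set (MvPolynomial σ R))).IsPrime := by
  refine Ideal.isPrime_iff.2 ⟨?_, fun {f g} hfg => ?_⟩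
  · rw [Ideal.ne_top_iff_one, mem_span_X_image_iff_vanishingOrder_ne_zero, not_not, vanishingOrder,
      MvPolynomial.coe_one, MvPowerSeries.weightedOrder_one]
  · simp only [mem_span_X_image_iff_vanishingOrder_ne_zero, vanishingOrder_mul] at hfg ⊢
    by_contra! h
    exact hfg (by rw [h.1, h.2, add_zero])

lemma X_mem_span_X_image_iff [Nontrivial R] {v : σ} :
    (X v : MvPolynomial σ R) ∈ Ideal.span (X '' C) ↔ v ∈ C := by
  classical
  rw [mem_ideal_span_X_image, support_X]
  simp [Finsupp.single_apply]

end VanishingOrder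

section VertexCover

variable {k V : Type*} [CommRing k] [DecidableEq V] {E : Finset (Finset V)} {C : Finset V}

/-- `C` is a vertex cover (transversal) of the hypergraph with edge set `E`: it meets every edge. -/
def IsVertexCover (E : Finset (Finset V)) (C : Finset V) : Prop :=
  ∀ e ∈ E, ∃ v ∈ e, v ∈ C

lemma edgeIdeal_le_span_X_image (hC : IsVertexCover E C) :
    edgeIdeal k E ≤ Ideal.span (X '' (C : Set V)) := by
  rw [edgeIdeal, Ideal.span_le]
  rintro _ ⟨e, he, rfl⟩
  obtain ⟨v, hve, hvC⟩ := hC e he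
  exact Ideal.mem_of_dvd _ (Finset.dvd_prod_of_mem _ hve)
    (Ideal.subset_span (Set.mem_image_of_mem X hvC))

lemma exists_edge_subset_insert_of_minimal (hC : Minimal (IsVertexCover E) C) {v : V}
    (hv : v ∈ C) : ∃ e ∈ E, e ⊆ insert v (E.sup id \ C) := by
  have hnot : ¬ IsVertexCover E (C.erase v) := hC.not_prop_of_lt (Finset.erase_ssubset hv)
  simp only [IsVertexCover, not_forall, not_exists, not_and] at hnot
  obtain ⟨e, he, hdisj⟩ := hnot
  refine ⟨e, he, fun u hu => ?_⟩
  have huE : u ∈ E.sup id := Finset.mem_sup.2 ⟨e, he, hu⟩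
  have huC := hdisj u hu
  grind

lemma span_X_image_mem_associatedPrimes [IsDomain k] (hC : Minimal (IsVertexCover E) C) :
    Ideal.span (X '' (C : Set V)) ∈
      associatedPrimes (MvPolynomial V k) (MvPolynomial V k ⧸ edgeIdeal k E) := by
  have hprime := isPrime_span_X_image (R := k) (C : Set V)
  have hout : ∏ u ∈ E.sup id \ C, X u ∉ Ideal.span (X '' (C : Set V) : Set (MvPolynomial V k)) := by
    rw [hprime.prod_mem_iff]
    rintro ⟨u, hu, hmem⟩
    exact (Finset.mem_sdiff.1 hu).2 (X_mem_span_X_image_iff.1 hmem)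
  have hle : Ideal.span (X '' (C : Set V)) ≤
      (edgeIdeal k E).colon {∏ u ∈ E.sup id \ C, X u} := by
    rw [Ideal.span_le]
    rintro _ ⟨v, hv, rfl⟩
    obtain ⟨e, he, hsub⟩ := exists_edge_subset_insert_of_minimal hC hv
    rw [SetLike.mem_coe, Submodule.mem_colon_singleton, smul_eq_mul,
      ← Finset.prod_insert fun h => (Finset.mem_sdiff.1 h).2 hv]
    exact Ideal.mem_of_dvd _ (Finset.prod_dvd_prod_of_subset _ _ _ hsub)
      (Ideal.subset_span ⟨e, he, rfl⟩)
  refine mem_associatedPrimes_quotient_of_mul_mem_iff (m := ∏ u ∈ E.sup id \ C, X u)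
    fun r => ⟨fun hr => ?_, fun hr => ?_⟩
  · exact (hprime.mem_or_mem (edgeIdeal_le_span_X_image hC.prop hr)).resolve_right hout
  · exact Submodule.mem_colon_singleton.1 (hle hr)

lemma le_sum_of_mem_symbolicPower_edgeIdeal [IsDomain k] {n : ℕ} {f : MvPolynomial V k}
    (hf : f ∈ symbolicPower (edgeIdeal k E) n) (hC : IsVertexCover E C) {b : V →₀ ℕ}
    (hb : b ∈ f.support) : n ≤ ∑ v ∈ C, b v := by
  obtain ⟨D, hDC, hD⟩ := exists_minimal_le_of_wellFoundedLT (IsVertexCover E) C hC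
  obtain ⟨s, hs, hsf⟩ :=
    exists_mul_mem_pow_of_mem_symbolicPower hf (span_X_image_mem_associatedPrimes hD)
  have hord := natCast_le_vanishingOrder_of_mem_span_X_image_pow
    (Ideal.pow_right_mono (edgeIdeal_le_span_X_image hD.prop) n hsf)
  rw [mem_span_X_image_iff_vanishingOrder_ne_zero, not_not] at hs
  rw [vanishingOrder_mul, hs, zero_add] at hord
  calc n ≤ Finsupp.weight ((D : Set V).indicator 1) b := natCast_le_vanishingOrder_iff.1 hord b hb
    _ = ∑ v ∈ D, b v := weight_indicator_one D b
    _ ≤ ∑ v ∈ C, b v := Finset.sum_le_sum_of_subset hDC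

end VertexCover

section EdgeExponent

variable {V : Type*} {e f : Finset V} {b : V →₀ ℕ}

/-- The exponent vector of the squarefree monomial attached to an edge. -/
noncomputable def edgeExponent (e : Finset V) : V →₀ ℕ :=
  ∑ v ∈ e, Finsupp.single v 1

lemma edgeExponent_apply [DecidableEq V] (e : Finset V) (v : V) :
    edgeExponent e v = if v ∈ e then 1 else 0 := by
  simp [edgeExponent, Finsupp.finsetSum_apply, Finsupp.single_apply]

lemma exists_mem_inter_eq_one (he : ∀ v ∈ e, b v ≠ 0) (hf : ∀ v ∈ f, b v ≠ 0)
    (hb : ¬ edgeExponent e + edgeExponent f ≤ b) : ∃ v, b v = 1 ∧ v ∈ e ∧ v ∈ f := by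
  classical
  rw [Finsupp.le_def, not_forall] at hb
  obtain ⟨v, hv⟩ := hb
  rw [Finsupp.add_apply, edgeExponent_apply, edgeExponent_apply] at hv
  have hev := he v
  have hfv := hf v
  grind

variable {k : Type*} [CommRing k] [DecidableEq V] {E : Finset (Finset V)}

lemma monomial_edgeExponent_mem_edgeIdeal (he : e ∈ E) :
    monomial (edgeExponent e) (1 : k) ∈ edgeIdeal k E := by
  rw [edgeExponent, monomial_sum_one]
  exact Ideal.subset_span ⟨e, he, rfl⟩

lemma monomial_mem_edgeIdeal_sq (he : e ∈ E) (hf : f ∈ E)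
    (hb : edgeExponent e + edgeExponent f ≤ b) (r : k) : monomial b r ∈ edgeIdeal k E ^ 2 := by
  have hmem : monomial (edgeExponent e + edgeExponent f) (1 : k) ∈ edgeIdeal k E ^ 2 := by
    rw [sq, ← one_mul (1 : k), ← monomial_mul]
    exact Ideal.mul_mem_mul (monomial_edgeExponent_mem_edgeIdeal he)
      (monomial_edgeExponent_mem_edgeIdeal hf)
  exact Ideal.mem_of_dvd _ (monomial_dvd_monomial.2 ⟨Or.inr hb, one_dvd r⟩) hmem

end EdgeExponent

section Helly

variable {V κ : Type*} {G : Finset (Finset V)} {w : Finset V → V} {c : V → κ} {u : V}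

/-- `w` witnesses that `G` is critical for having no common vertex: `w e` lies on every member of
`G` except `e`. -/
def IsCriticalWitness (G : Finset (Finset V)) (w : Finset V → V) : Prop :=
  ∀ e ∈ G, ∀ f ∈ G, w e ∈ f ↔ f ≠ e

lemma exists_isCriticalWitness [Nonempty V] {T : Set V}
    (hG : Minimal (fun G : Finset (Finset V) => ¬ ∃ v ∈ T, ∀ e ∈ G, v ∈ e) G) :
    ∃ w, IsCriticalWitness G w := by
  classical
  have hex : ∀ e ∈ G, ∃ v ∈ T, ∀ f ∈ G.erase e, v ∈ f := fun e he =>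
    not_not.1 (hG.not_prop_of_lt (Finset.erase_ssubset he))
  choose! w hwT hw using hex
  refine ⟨w, fun e he f hf => ⟨?_, fun hne => hw e he f (Finset.mem_erase.2 ⟨hne, hf⟩)⟩⟩
  rintro hmem rfl
  refine hG.prop ⟨w f, hwT f hf, fun g hg => ?_⟩
  rcases eq_or_ne g f with rfl | hne
  · exact hmem
  · exact hw f hf g (Finset.mem_erase.2 ⟨hne, hg⟩)

namespace IsCriticalWitness

lemma eq_and_eq_of_color_eq (hw : IsCriticalWitness G w) (hG : 2 < G.card)
    (hc : ∀ e ∈ G, Set.InjOn c e) {e f : Finset V} (hf : f ∈ G)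
    (hu : ∀ g ∈ G, g ≠ e → u ∈ g) (huf : c u = c (w f)) : e = f ∧ u = w f := by
  classical
  obtain ⟨g, hg, hgef⟩ := Finset.exists_mem_notMem_of_card_lt_card
    ((Finset.card_le_two (a := e) (b := f)).trans_lt hG)
  simp only [Finset.mem_insert, Finset.mem_singleton, not_or] at hgef
  obtain rfl : u = w f := hc g hg (hu g hg hgef.1) ((hw f hf g hg).2 hgef.2) huf
  refine ⟨?_, rfl⟩
  by_contra hne
  exact (hw f hf f hf).1 (hu f hf (Ne.symm hne)) rfl

lemma injOn_color (hw : IsCriticalWitness G w) (hG : 2 < G.card)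
    (hc : ∀ e ∈ G, Set.InjOn c e) : Set.InjOn (c ∘ w) G := fun e he _ hf hef =>
  (hw.eq_and_eq_of_color_eq hG hc hf (fun g hg => (hw e he g hg).2) hef).1

lemma card_le [Fintype κ] (hw : IsCriticalWitness G w) (hG : 2 < G.card)
    (hc : ∀ e ∈ G, Set.InjOn c e) : G.card ≤ Fintype.card κ :=
  Finset.card_le_card_of_injOn (c ∘ w) (fun _ _ => Finset.mem_univ _) (hw.injOn_color hG hc)

lemma eq_of_forall_mem [Fintype κ] (hw : IsCriticalWitness G w) (hG : 2 < G.card)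
    (hκ : Fintype.card κ ≤ G.card) (hc : ∀ e ∈ G, Set.InjOn c e) {e : Finset V}
    (hu : ∀ g ∈ G, g ≠ e → u ∈ g) : u = w e := by
  obtain ⟨f, hf, hfu⟩ := Finset.surjOn_of_injOn_of_card_le (t := Finset.univ) (c ∘ w)
    (fun _ _ => Finset.mem_univ _) (hw.injOn_color hG hc) hκ (Finset.mem_univ (c u))
  obtain ⟨rfl, rfl⟩ := hw.eq_and_eq_of_color_eq hG hc hf hu hfu.symm
  rfl

lemma exists_badTriple [DecidableEq V] {E : Finset (Finset V)} {c : V → Fin 3}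
    (hw : IsCriticalWitness G w) (hG : G.card = 3) (hGE : G ⊆ E)
    (hc : ∀ e ∈ G, Set.InjOn c e) : ∃ e₁ e₂ e₃, BadTriple E e₁ e₂ e₃ := by
  have hunique {e u} (hu : ∀ g ∈ G, g ≠ e → u ∈ g) : u = w e :=
    hw.eq_of_forall_mem (by omega) (by simp [hG]) hc hu
  obtain ⟨e₁, e₂, e₃, h₁₂, h₁₃, h₂₃, rfl⟩ := Finset.card_eq_three.1 hG
  have hinj := hw.injOn_color (by omega) hc
  have hw₁₂ : w e₁ ≠ w e₂ := fun h => h₁₂ (hinj (by simp) (by simp) (congrArg c h))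
  have hw₁₃ : w e₁ ≠ w e₃ := fun h => h₁₃ (hinj (by simp) (by simp) (congrArg c h))
  have hw₂₃ : w e₂ ≠ w e₃ := fun h => h₂₃ (hinj (by simp) (by simp) (congrArg c h))
  have hinter₁₂ : e₁ ∩ e₂ = {w e₃} := by
    ext u
    have := @hunique e₃ u
    grind [IsCriticalWitness]
  have hinter₂₃ : e₂ ∩ e₃ = {w e₁} := by
    ext u
    have := @hunique e₁ u
    grind [IsCriticalWitness]
  have hinter₁₃ : e₁ ∩ e₃ = {w e₂} := by
    ext u
    have := @hunique e₂ u
    grind [IsCriticalWitness]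
  refine ⟨e₁, e₂, e₃, hGE (by simp), hGE (by simp), hGE (by simp), h₁₂, h₂₃, h₁₃, ?_⟩
  simp [hinter₁₂, hinter₂₃, hinter₁₃, hw₁₂, hw₁₃.symm, hw₂₃.symm]

end IsCriticalWitness

lemma exists_common_vertex_of_card_le_two {T : Set V} (hne : G.Nonempty) (hG : G.card ≤ 2)
    (hpair : ∀ e ∈ G, ∀ f ∈ G, ∃ v ∈ T, v ∈ e ∧ v ∈ f) : ∃ v ∈ T, ∀ e ∈ G, v ∈ e := by
  classical
  have hpos : 0 < G.card := hne.card_pos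
  obtain hone | htwo : G.card = 1 ∨ G.card = 2 := by omega
  · obtain ⟨e, rfl⟩ := Finset.card_eq_one.1 hone
    simpa using hpair e (by simp) e (by simp)
  · obtain ⟨e, f, -, rfl⟩ := Finset.card_eq_two.1 htwo
    simpa using hpair e (by simp) f (by simp)

lemma exists_common_vertex [DecidableEq V] {E F : Finset (Finset V)} {c : V → Fin 3} {T : Set V}
    (hc : ∀ e ∈ E, Set.InjOn c e) (hnobad : ¬ ∃ e₁ e₂ e₃ : Finset V, BadTriple E e₁ e₂ e₃)
    (hFE : F ⊆ E) (hF : F.Nonempty) (hpair : ∀ e ∈ F, ∀ f ∈ F, ∃ v ∈ T, v ∈ e ∧ v ∈ f) :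
    ∃ v ∈ T, ∀ e ∈ F, v ∈ e := by
  by_contra hno
  obtain ⟨G, hGF, hG⟩ := exists_minimal_le_of_wellFoundedLT
    (fun G : Finset (Finset V) => ¬ ∃ v ∈ T, ∀ e ∈ G, v ∈ e) F hno
  obtain ⟨e, he⟩ := hF
  obtain ⟨v, hvT, -⟩ := hpair e he e he
  have : Nonempty V := ⟨v⟩
  obtain ⟨w, hw⟩ := exists_isCriticalWitness hG
  have hcG : ∀ e ∈ G, Set.InjOn c e := fun e he => hc e (hFE (hGF he))
  have hne : G.Nonempty := by
    rw [Finset.nonempty_iff_ne_empty]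
    rintro rfl
    exact hG.prop ⟨v, hvT, by simp⟩
  have htwo : 2 < G.card := by
    by_contra! hle
    exact hG.prop (exists_common_vertex_of_card_le_two hne hle
      fun e he f hf => hpair e (hGF he) f (hGF hf))
  have hthree : G.card ≤ 3 := by simpa using hw.card_le htwo hcG
  exact hnobad (hw.exists_badTriple (by omega) (hGF.trans hFE) hcG)

end Helly

lemma exists_isVertexCover_sum_le_one {V : Type*} [DecidableEq V] {E : Finset (Finset V)}
    {c : V → Fin 3} (hc : ∀ e ∈ E, Set.InjOn c e)
    (hnobad : ¬ ∃ e₁ e₂ e₃ : Finset V, BadTriple E e₁ e₂ e₃) {b : V →₀ ℕ}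
    (hb : ∀ e ∈ E, ∀ f ∈ E, ¬ edgeExponent e + edgeExponent f ≤ b) :
    ∃ C, IsVertexCover E C ∧ ∑ v ∈ C, b v ≤ 1 := by
  let Z : Finset V := {v ∈ E.sup id | b v = 0}
  let F : Finset (Finset V) := {e ∈ E | ∀ v ∈ e, b v ≠ 0}
  have hZ : ∑ v ∈ Z, b v = 0 := Finset.sum_eq_zero fun v hv => (Finset.mem_filter.1 hv).2
  have hcover : ∀ e ∈ E, e ∉ F → ∃ v ∈ e, v ∈ Z := by
    intro e he heF
    obtain ⟨v, hve, hv⟩ : ∃ v ∈ e, b v = 0 := by simpa [F, he] using heF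
    exact ⟨v, hve, Finset.mem_filter.2 ⟨Finset.mem_sup.2 ⟨e, he, hve⟩, hv⟩⟩
  rcases F.eq_empty_or_nonempty with hF | hF
  · exact ⟨Z, fun e he => hcover e he (by simp [hF]), by simp [hZ]⟩
  · have hpair : ∀ e ∈ F, ∀ f ∈ F, ∃ v ∈ {v | b v = 1}, v ∈ e ∧ v ∈ f := by
      intro e he f hf
      obtain ⟨heE, he⟩ := Finset.mem_filter.1 he
      obtain ⟨hfE, hf⟩ := Finset.mem_filter.1 hf
      exact exists_mem_inter_eq_one he hf (hb e heE f hfE)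
    obtain ⟨v, hv, hvF⟩ :=
      exists_common_vertex hc hnobad (Finset.filter_subset _ E) hF hpair
    refine ⟨insert v Z, fun e he => ?_, ?_⟩
    · by_cases heF : e ∈ F
      · exact ⟨v, hvF e heF, Finset.mem_insert_self v Z⟩
      · obtain ⟨u, hu, huZ⟩ := hcover e he heF
        exact ⟨u, hu, Finset.mem_insert_of_mem huZ⟩
    · have hvZ : v ∉ Z := fun h => one_ne_zero (hv.symm.trans (Finset.mem_filter.1 h).2)
      rw [Finset.sum_insert hvZ, hZ, add_zero, show b v = 1 from hv]

lemma exists_coloring_injOn {V ι : Type*} [DecidableEq V] {E : Finset (Finset V)}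
    {P : ι → Finset V} (hcover : ∀ v, ∃ i, v ∈ P i) (hP : ∀ e ∈ E, ∀ i, (e ∩ P i).card ≤ 1) :
    ∃ c : V → ι, ∀ e ∈ E, Set.InjOn c e := by
  choose c hc using hcover
  refine ⟨c, fun e he u hu v hv huv => Finset.card_le_one.1 (hP e he (c u)) u ?_ v ?_⟩
  · exact Finset.mem_inter.2 ⟨hu, hc u⟩
  · exact Finset.mem_inter.2 ⟨hv, huv ▸ hc v⟩

theorem stmt7_general {k V : Type*} [CommRing k] [IsDomain k] [DecidableEq V]
    {E : Finset (Finset V)} {c : V → Fin 3} (hc : ∀ e ∈ E, Set.InjOn c e)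
    (hnobad : ¬ ∃ e₁ e₂ e₃ : Finset V, BadTriple E e₁ e₂ e₃) :
    symbolicPower (edgeIdeal k E) 2 = (edgeIdeal k E) ^ 2 := by
  refine le_antisymm (fun f hf => ?_) (pow_le_symbolicPower _ 2)
  rw [← support_sum_monomial_coeff f]
  refine Ideal.sum_mem _ fun b hb => ?_
  by_contra hmem
  obtain ⟨C, hC, hdeg⟩ := exists_isVertexCover_sum_le_one hc hnobad
    fun e he g hg h => hmem (monomial_mem_edgeIdeal_sq he hg h _)
  have hle := le_sum_of_mem_symbolicPower_edgeIdeal hf hC hb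
  omega

/-- if a simple 3-uniform 3-partite hypergraph contains no bad
subhypergraph of length 3, then the second symbolic and ordinary powers of its
edge ideal agree. -/
theorem stmt7 {k V : Type*} [Field k] [Fintype V] [DecidableEq V]
    (E : Finset (Finset V))
    (huniform : ∀ e ∈ E, e.card = 3)
    (Xp : Fin 3 → Finset V)
    (hdisj : Pairwise fun i j => Disjoint (Xp i) (Xp j))
    (hcover : ∀ v : V, ∃ i, v ∈ Xp i)
    (hpartite : ∀ e ∈ E, ∀ i, (e ∩ Xp i).card = 1)
    (hnobad : ¬ ∃ e₁ e₂ e₃ : Finset V, BadTriple E e₁ e₂ e₃) :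
    symbolicPower (edgeIdeal k E) 2 = (edgeIdeal k E) ^ 2 := by
  obtain ⟨c, hc⟩ := exists_coloring_injOn hcover fun e he i => (hpartite e he i).le
  exact stmt7_general hc hnobad
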